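/- Let R be a commutative Noetherian ring of finite Krull dimension. Then R satisfies (SAC) if and only if rfed(R) ≤ dim R, which also holds if and only if rfed(R) < ∞. -/

import Mathlib

open CategoryTheory

/-- The `i`-th Ext group of `R`-modules `M` and `N`. -/
noncomputable abbrev ExtGroup (R : Type) [CommRing R] (M N : ModuleCat.{0} R) (i : ℕ) : Type :=
  (((Ext R (ModuleCat.{0} R) i).obj (Opposite.op M)).obj N)

/-- The symmetric Auslander condition (SAC): for every finitely generated `R`-module `M`,
if `Ext^i(M,R) = 0` for all `i > 0` and `Ext^i(M,M) = 0` for `i ≫ 0`,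
then `Ext^i(M,M) = 0` for all `i > 0`. -/
def SAC (R : Type) [CommRing R] : Prop :=
  ∀ M : ModuleCat.{0} R, Module.Finite R M →
    (∀ i : ℕ, 0 < i → Subsingleton (ExtGroup R M (ModuleCat.of R R) i)) →
    (∃ N : ℕ, ∀ i : ℕ, N < i → Subsingleton (ExtGroup R M M i)) →
    ∀ i : ℕ, 0 < i → Subsingleton (ExtGroup R M M i)

/-- The self-extension degree `ext.deg M = sup { i | Ext^i(M,M) ≠ 0 }`, in `ℕ∞`. -/
noncomputable def extDeg (R : Type) [CommRing R] (M : ModuleCat.{0} R) : ℕ∞ :=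
  sSup {n : ℕ∞ | ∃ i : ℕ, n = i ∧ ¬ Subsingleton (ExtGroup R M M i)}

/-- The restricted finitistic extension degree
`rfed R = sup { ext.deg (M ⊕ R) | M f.g., ext.deg (M ⊕ R) < ∞ }`. -/
noncomputable def rfed (R : Type) [CommRing R] : ℕ∞ :=
  sSup {n : ℕ∞ | ∃ M : ModuleCat.{0} R, Module.Finite R M ∧
    extDeg R (ModuleCat.of R (M × R)) < ⊤ ∧ n = extDeg R (ModuleCat.of R (M × R))}

/-!
The idea is to replace a finitely generated module `M` with `Ext^{>0}(M, R) = 0` by `M ⊕ ΩM`, where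
`ΩM` is a first syzygy. This keeps the vanishing against `R`, and the long exact sequences of
`0 → ΩM → P → M → 0` show that self-extensions of `M ⊕ ΩM` vanish above degree `n + 1` if and only
if those of `M` vanish above degree `n`. After `k` steps the bound has moved by exactly `k`, so a
finite value `r` of `rfed R`, applied after `r` steps, says that `M` has no self-extensions in
positive degree.

Conversely, (SAC) applied to `M ⊕ ΩM` gives `Ext^1(M, ΩM) = 0`, so the syzygy sequence splits and
`M` is projective. By passing to syzygies, every `M` with `ext.deg (M ⊕ R) < ∞` has finite
projective dimension, which is then at most `dim R` by localizing the inequality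
`pd M ≤ depth R ≤ dim R` of Auslander and Buchsbaum.
-/

open Abelian Limits

universe w v u

section AbelianCategory

variable {C : Type u} [Category.{v} C] [Abelian C] [HasExt.{w} C]

lemma subsingleton_ext_of_retract_left {X X' : C} (r : Retract X X') (Y : C) (i : ℕ)
    [Subsingleton (Abelian.Ext X' Y i)] : Subsingleton (Abelian.Ext X Y i) :=
  Function.LeftInverse.injective (f := fun e ↦ (Ext.mk₀ r.r).comp e (zero_add i))
    (g := fun e ↦ (Ext.mk₀ r.i).comp e (zero_add i)) (by intro; simp) |>.subsingleton

lemma subsingleton_ext_of_retract_right {Y Y' : C} (r : Retract Y Y') (X : C) (i : ℕ)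
    [Subsingleton (Abelian.Ext X Y' i)] : Subsingleton (Abelian.Ext X Y i) :=
  Function.LeftInverse.injective (f := fun e ↦ e.comp (Ext.mk₀ r.i) (add_zero i))
    (g := fun e ↦ e.comp (Ext.mk₀ r.r) (add_zero i)) (by intro; simp) |>.subsingleton

/-- `Ext^i(X, Y) = 0` for all `i > n`. For `X = Y` this is the bound `ext.deg X ≤ n`, stated so
that it can also be used with two different objects. -/
def ExtVanishesAbove (n : ℕ) (X Y : C) : Prop :=
  ∀ i, n < i → Subsingleton (Abelian.Ext X Y i)

namespace ExtVanishesAbove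

variable {m n : ℕ} {X X' Y Y' : C}

lemma mono (h : ExtVanishesAbove m X Y) (hmn : m ≤ n) : ExtVanishesAbove n X Y :=
  fun i hi ↦ h i (hmn.trans_lt hi)

lemma of_hasProjectiveDimensionLE (X Y : C) (n : ℕ) [HasProjectiveDimensionLE X n] :
    ExtVanishesAbove n X Y :=
  fun i hi ↦ HasProjectiveDimensionLT.subsingleton X (n + 1) i hi Y

lemma of_projective (X Y : C) [Projective X] : ExtVanishesAbove n X Y :=
  (of_hasProjectiveDimensionLE X Y 0).mono n.zero_le

lemma of_retract_left (r : Retract X X') (h : ExtVanishesAbove n X' Y) :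
    ExtVanishesAbove n X Y := fun i hi ↦
  have := h i hi
  subsingleton_ext_of_retract_left r Y i

lemma of_retract_right (r : Retract Y Y') (h : ExtVanishesAbove n X Y') :
    ExtVanishesAbove n X Y := fun i hi ↦
  have := h i hi
  subsingleton_ext_of_retract_right r X i

lemma self_iff_of_iso (e : X ≅ Y) : ExtVanishesAbove n X X ↔ ExtVanishesAbove n Y Y :=
  ⟨fun h ↦ (h.of_retract_left (.ofIso e.symm)).of_retract_right (.ofIso e.symm),
    fun h ↦ (h.of_retract_left (.ofIso e)).of_retract_right (.ofIso e)⟩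

lemma biprod_left_iff :
    ExtVanishesAbove n (X ⊞ X') Y ↔ ExtVanishesAbove n X Y ∧ ExtVanishesAbove n X' Y := by
  refine ⟨fun h ↦ ⟨h.of_retract_left ⟨biprod.inl, biprod.fst, biprod.inl_fst⟩,
    h.of_retract_left ⟨biprod.inr, biprod.snd, biprod.inr_snd⟩⟩, fun ⟨h, h'⟩ i hi ↦ ?_⟩
  have := h i hi
  have := h' i hi
  exact Ext.biprodAddEquiv.subsingleton

lemma biprod_right_iff :
    ExtVanishesAbove n X (Y ⊞ Y') ↔ ExtVanishesAbove n X Y ∧ ExtVanishesAbove n X Y' := by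
  refine ⟨fun h ↦ ⟨h.of_retract_right ⟨biprod.inl, biprod.fst, biprod.inl_fst⟩,
    h.of_retract_right ⟨biprod.inr, biprod.snd, biprod.inr_snd⟩⟩, fun ⟨h, h'⟩ i hi ↦ ?_⟩
  have := h i hi
  have := h' i hi
  exact Ext.addEquivBiprod.subsingleton

end ExtVanishesAbove

variable {S : ShortComplex C} {n : ℕ}

lemma extVanishesAbove_X₁_left_iff (hS : S.ShortExact) [Projective S.X₂] (Y : C) :
    ExtVanishesAbove n S.X₁ Y ↔ ExtVanishesAbove (n + 1) S.X₃ Y := by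
  have hP : ExtVanishesAbove 0 S.X₂ Y := .of_projective _ _
  constructor
  · rintro h (_ | i) hi
    · omega
    · have := h i (by omega)
      refine subsingleton_of_forall_eq 0 fun e ↦ ?_
      obtain ⟨y, rfl⟩ := Ext.contravariant_sequence_exact₃ hS Y e
        ((hP _ i.succ_pos).elim _ _) (add_comm 1 i)
      rw [Subsingleton.elim y 0, Ext.comp_zero]
  · intro h i hi
    have := hP i (by omega)
    refine subsingleton_of_forall_eq 0 fun e ↦ ?_
    obtain ⟨y, rfl⟩ := Ext.contravariant_sequence_exact₁ hS Y e (add_comm 1 i)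
      ((h (i + 1) (by omega)).elim _ _)
    rw [Subsingleton.elim y 0, Ext.comp_zero]

lemma extVanishesAbove_X₃_right_iff (hS : S.ShortExact) {X : C} (hX : ExtVanishesAbove n X S.X₂) :
    ExtVanishesAbove n X S.X₃ ↔ ExtVanishesAbove (n + 1) X S.X₁ := by
  constructor
  · rintro h (_ | i) hi
    · omega
    · have := h i (by omega)
      refine subsingleton_of_forall_eq 0 fun e ↦ ?_
      obtain ⟨y, rfl⟩ := Ext.covariant_sequence_exact₁ X hS e
        ((hX (i + 1) (by omega)).elim _ _) rfl
      rw [Subsingleton.elim y 0, Ext.zero_comp]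
  · intro h i hi
    have := hX i hi
    refine subsingleton_of_forall_eq 0 fun e ↦ ?_
    obtain ⟨y, rfl⟩ := Ext.covariant_sequence_exact₃ X hS e rfl ((h (i + 1) (by omega)).elim _ _)
    rw [Subsingleton.elim y 0, Ext.zero_comp]

lemma exists_not_subsingleton_ext_X₃_of_comp_f_eq_zero (hS : S.ShortExact) {X : C} {j : ℕ}
    (hf : ∀ e : Abelian.Ext X S.X₁ j, e.comp (Ext.mk₀ S.f) (add_zero j) = 0)
    (hj : ¬ Subsingleton (Abelian.Ext X S.X₁ j)) :
    ∃ i, i + 1 = j ∧ ¬ Subsingleton (Abelian.Ext X S.X₃ i) := by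
  cases j with
  | zero =>
    have := hS.mono_f
    refine absurd (subsingleton_of_forall_eq 0 fun e ↦ ?_) hj
    exact Ext.postcomp_mk₀_injective_of_mono X S.f (by simpa using hf e)
  | succ i =>
    refine ⟨i, rfl, fun h ↦ hj (subsingleton_of_forall_eq 0 fun e ↦ ?_)⟩
    obtain ⟨y, rfl⟩ := Ext.covariant_sequence_exact₁ X hS e (hf e) rfl
    rw [Subsingleton.elim y 0, Ext.zero_comp]

lemma projective_X₃_of_subsingleton_ext_one (hS : S.ShortExact) [Projective S.X₂]
    [Subsingleton (Abelian.Ext S.X₃ S.X₁ 1)] : Projective S.X₃ := by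
  obtain ⟨e, he⟩ := Ext.covariant_sequence_exact₃ S.X₃ hS (Ext.mk₀ (𝟙 S.X₃)) (zero_add 1)
    (Subsingleton.elim _ _)
  obtain ⟨s, rfl⟩ := (Ext.mk₀_bijective S.X₃ S.X₂).2 e
  rw [Ext.mk₀_comp_mk₀] at he
  exact (Retract.mk s S.g ((Ext.mk₀_bijective _ _).1 he)).projective

lemma extVanishesAbove_zero_biprod_left_iff (hS : S.ShortExact) [Projective S.X₂] {Y : C} :
    ExtVanishesAbove 0 (S.X₃ ⊞ S.X₁) Y ↔ ExtVanishesAbove 0 S.X₃ Y := by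
  rw [ExtVanishesAbove.biprod_left_iff, extVanishesAbove_X₁_left_iff hS, and_iff_left_iff_imp]
  exact fun h ↦ h.mono zero_le_one

lemma extVanishesAbove_succ_biprod_self_iff (hS : S.ShortExact) [Projective S.X₂]
    (h : ExtVanishesAbove 0 S.X₃ S.X₂) :
    ExtVanishesAbove (n + 1) (S.X₃ ⊞ S.X₁) (S.X₃ ⊞ S.X₁) ↔ ExtVanishesAbove n S.X₃ S.X₃ := by
  have h₃₁ : ExtVanishesAbove n S.X₃ S.X₃ ↔ ExtVanishesAbove (n + 1) S.X₃ S.X₁ :=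
    extVanishesAbove_X₃_right_iff hS (h.mono n.zero_le)
  rw [ExtVanishesAbove.biprod_left_iff, extVanishesAbove_X₁_left_iff hS, and_iff_left_of_imp
    fun hN ↦ hN.mono (Nat.le_succ _), ExtVanishesAbove.biprod_right_iff, h₃₁,
    and_iff_right_of_imp fun hK ↦ (h₃₁.2 hK).mono n.le_succ]

end AbelianCategory

section Modules

variable {R : Type u} [CommRing R]

lemma subsingleton_ext_of_finite_projective {X : ModuleCat.{u} R} {i : ℕ}
    [Subsingleton (Abelian.Ext X (ModuleCat.of R R) i)] (P : ModuleCat.{u} R)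
    [Module.Finite R P] [Projective P] : Subsingleton (Abelian.Ext X P i) := by
  have : Module.Projective R P := (IsProjective.iff_projective (R := R) P).2 inferInstance
  obtain ⟨n, f, g, -, -, hfg⟩ := Module.Finite.exists_comp_eq_id_of_projective R P
  have : Subsingleton (Abelian.Ext X (⨁ fun _ : Fin n ↦ ModuleCat.of R R) i) :=
    (Ext.addEquivBiproduct X (biproduct.isBilimit _) i).subsingleton
  have : Subsingleton (Abelian.Ext X (ModuleCat.of R (Fin n → R)) i) :=
    subsingleton_ext_of_retract_right
      (.ofIso (ModuleCat.biproductIsoPi fun _ : Fin n ↦ ModuleCat.of R R).symm) X i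
  refine subsingleton_ext_of_retract_right (Y' := ModuleCat.of R (Fin n → R))
    ⟨ModuleCat.ofHom g, ModuleCat.ofHom f, ?_⟩ X i
  rw [← ModuleCat.ofHom_comp, hfg]
  rfl

lemma ExtVanishesAbove.right_of_finite_projective {n : ℕ} {X : ModuleCat.{u} R}
    (h : ExtVanishesAbove n X (ModuleCat.of R R)) (P : ModuleCat.{u} R)
    [Module.Finite R P] [Projective P] : ExtVanishesAbove n X P := fun i hi ↦
  have := h i hi
  subsingleton_ext_of_finite_projective P

lemma ExtVanishesAbove.prod_self_iff {n : ℕ} {M : ModuleCat.{u} R} :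
    ExtVanishesAbove n (ModuleCat.of R (M × R)) (ModuleCat.of R (M × R)) ↔
      ExtVanishesAbove n M M ∧ ExtVanishesAbove n M (ModuleCat.of R R) := by
  have : Projective (ModuleCat.of R R) := ModuleCat.projective_of_categoryTheory_projective _
  have hR (Y : ModuleCat.{u} R) : ExtVanishesAbove n (ModuleCat.of R R) Y := .of_projective _ _
  rw [← self_iff_of_iso (ModuleCat.biprodIsoProd M (ModuleCat.of R R)), biprod_left_iff,
    and_iff_left (hR _), biprod_right_iff]

variable [IsNoetherianRing R]

lemma exists_shortExact_finite_projective (M : ModuleCat.{u} R) [Module.Finite R M] :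
    ∃ S : ShortComplex (ModuleCat.{u} R), S.ShortExact ∧ S.X₃ = M ∧ Projective S.X₂ ∧
      Module.Finite R S.X₂ ∧ Module.Finite R S.X₁ := by
  obtain ⟨n, f, hf⟩ := Module.Finite.exists_fin' R M
  exact ⟨f.shortComplexKer, LinearMap.shortExact_shortComplexKer hf, rfl,
    ModuleCat.projective_of_categoryTheory_projective _,
    inferInstanceAs (Module.Finite R (Fin n → R)), inferInstanceAs (Module.Finite R f.ker)⟩

lemma exists_extVanishesAbove_add_self_iff {M : ModuleCat.{u} R} [Module.Finite R M]
    (h : ExtVanishesAbove 0 M (ModuleCat.of R R)) (k : ℕ) :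
    ∃ N : ModuleCat.{u} R, Module.Finite R N ∧ ExtVanishesAbove 0 N (ModuleCat.of R R) ∧
      ∀ n, ExtVanishesAbove (n + k) N N ↔ ExtVanishesAbove n M M := by
  induction k with
  | zero => exact ⟨M, inferInstance, h, fun n ↦ Iff.rfl⟩
  | succ k ih =>
    obtain ⟨N, _, hN, hiff⟩ := ih
    obtain ⟨S, hS, rfl, _, _, _⟩ := exists_shortExact_finite_projective N
    refine ⟨S.X₃ ⊞ S.X₁, ?_, extVanishesAbove_zero_biprod_left_iff hS |>.2 hN, fun n ↦ ?_⟩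
    · exact .equiv (ModuleCat.biprodIsoProd S.X₃ S.X₁).toLinearEquiv.symm
    · rw [← hiff, ← extVanishesAbove_succ_biprod_self_iff hS (hN.right_of_finite_projective S.X₂)]
      rfl

end Modules

section LocalRing

open IsLocalRing TensorProduct

variable {R : Type u} [CommRing R]

lemma mem_smul_top_of_range_le_smul_top {I : Ideal R} {M N : Type*} [AddCommGroup M]
    [Module R M] [Module.Free R M] [Module.Finite R M] [AddCommGroup N] [Module R N] {f : M →ₗ[R] N}
    (hf : f.range ≤ I • ⊤) : f ∈ I • (⊤ : Submodule R (M →ₗ[R] N)) := by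
  let b := Module.Free.chooseBasis R M
  have hsum : f = ∑ j, (b.coord j).smulRight (f (b j)) :=
    b.ext fun j ↦ by classical simp [LinearMap.sum_apply, Finsupp.single_apply]
  rw [hsum]
  exact Submodule.sum_mem _ fun j _ ↦ Submodule.smul_top_le_comap_smul_top I
    (LinearMap.smulRightₗ (b.coord j)) (hf (LinearMap.mem_range_self f (b j)))

lemma ext_comp_mk₀_eq_zero_of_mem_smul_top {I : Ideal R} {k X Y : ModuleCat.{u} R}
    (hI : I ≤ Module.annihilator R k) {f : X ⟶ Y} (hf : f ∈ I • (⊤ : Submodule R (X ⟶ Y))) {i : ℕ}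
    (e : Abelian.Ext k X i) : e.comp (Ext.mk₀ f) (add_zero i) = 0 := by
  induction hf using Submodule.smul_induction_on' with
  | smul r hr g _ =>
    have hk : r • 𝟙 k = 0 := by
      ext x
      exact Module.mem_annihilator.1 (hI hr) x
    calc e.comp (Ext.mk₀ (r • g)) (add_zero i)
      _ = (Ext.mk₀ (r • 𝟙 k)).comp (e.comp (Ext.mk₀ g) (add_zero i)) (zero_add i) := by
        simp [Ext.mk₀_smul]
      _ = 0 := by rw [hk, Ext.mk₀_zero, Ext.zero_comp]
  | add g _ g' _ hg hg' => rw [Ext.mk₀_add, Ext.comp_add, hg, hg', add_zero]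

lemma ext_comp_mk₀_eq_zero_of_range_le {I : Ideal R} {k X Y : ModuleCat.{u} R}
    (hI : I ≤ Module.annihilator R k) [Module.Free R X] [Module.Finite R X] {f : X ⟶ Y}
    (hf : f.hom.range ≤ I • ⊤) {i : ℕ} (e : Abelian.Ext k X i) :
    e.comp (Ext.mk₀ f) (add_zero i) = 0 := by
  refine ext_comp_mk₀_eq_zero_of_mem_smul_top hI ?_ e
  exact Submodule.smul_top_le_comap_smul_top I (ModuleCat.homLinearEquiv (S := R)).symm.toLinearMap
    (mem_smul_top_of_range_le_smul_top hf)

lemma subsingleton_ext_self_of_free {X M : ModuleCat.{u} R} [Module.Free R M] [Nontrivial M]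
    {i : ℕ} [Subsingleton (Abelian.Ext X M i)] :
    Subsingleton (Abelian.Ext X (ModuleCat.of R R) i) := by
  let b := Module.Free.chooseBasis R M
  obtain ⟨j⟩ := b.index_nonempty
  refine subsingleton_ext_of_retract_right (Y' := M)
    ⟨ModuleCat.ofHom (LinearMap.toSpanSingleton R M (b j)), ModuleCat.ofHom (b.coord j), ?_⟩ X i
  ext
  simp

variable [IsLocalRing R]

lemma exists_surjective_ker_le_maximalIdeal_smul_top (M : Type u) [AddCommGroup M] [Module R M]
    [Module.Finite R M] : ∃ (n : ℕ) (f : (Fin n → R) →ₗ[R] M),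
      Function.Surjective f ∧ f.ker ≤ maximalIdeal R • ⊤ := by
  let b := Module.finBasis (ResidueField R) (ResidueField R ⊗[R] M)
  obtain ⟨v, hv⟩ := (TensorProduct.mk_surjective R M (ResidueField R)
    Ideal.Quotient.mk_surjective).comp_left b
  have hb (i) : 1 ⊗ₜ[R] v i = b i := congrFun hv i
  refine ⟨_, Fintype.linearCombination R v, ?_, fun x hx ↦ ?_⟩
  · rw [← LinearMap.range_eq_top, Fintype.range_linearCombination]
    exact span_eq_top_of_tmul_eq_basis v b hb
  · have hsum : ∑ i, residue R (x i) • b i = 0 := by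
      have htmul : (1 : ResidueField R) ⊗ₜ[R] Fintype.linearCombination R v x = 0 := by
        rw [LinearMap.mem_ker.1 hx, tmul_zero]
      simp_rw [← hb]
      rw [← htmul, Fintype.linearCombination_apply, tmul_sum]
      refine Finset.sum_congr rfl fun i _ ↦ ?_
      rw [tmul_smul, ← algebraMap_smul (ResidueField R) (x i)]
      rfl
    have hx (i) : x i ∈ maximalIdeal R :=
      (residue_eq_zero_iff _).1 (Fintype.linearIndependent_iff.1 b.linearIndependent _ hsum i)
    rw [pi_eq_sum_univ' x]
    exact Submodule.sum_mem _ fun i _ ↦ Submodule.smul_mem_smul (hx i) Submodule.mem_top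

lemma free_of_finite_of_projective (M : ModuleCat.{u} R) [Module.Finite R M] [Projective M] :
    Module.Free R M :=
  have : Module.Projective R M := (IsProjective.iff_projective (R := R) M).2 inferInstance
  Module.free_of_flat_of_isLocalRing

lemma annihilator_residueField : Module.annihilator R (ResidueField R) = maximalIdeal R :=
  Ideal.annihilator_quotient

variable [IsNoetherianRing R]

lemma exists_shortExact_finite_free_range_le (M : ModuleCat.{u} R) [Module.Finite R M] :
    ∃ S : ShortComplex (ModuleCat.{u} R), S.ShortExact ∧ S.X₃ = M ∧ Module.Free R S.X₂ ∧
      Module.Finite R S.X₂ ∧ Module.Finite R S.X₁ ∧ S.f.hom.range ≤ maximalIdeal R • ⊤ := by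
  obtain ⟨n, f, hf, hker⟩ := exists_surjective_ker_le_maximalIdeal_smul_top (R := R) M
  exact ⟨f.shortComplexKer, LinearMap.shortExact_shortComplexKer hf, rfl,
    inferInstanceAs (Module.Free R (Fin n → R)), inferInstanceAs (Module.Finite R (Fin n → R)),
    inferInstanceAs (Module.Finite R f.ker), f.ker.range_subtype.trans_le hker⟩

-- The inclusion `K → F` of a minimal syzygy induces zero on the nonzero `Ext^j(k, K)` given by
-- induction on `p`: by minimality if `K` is free, and otherwise because `Ext^j(k, F) = 0`. So the
-- nonvanishing descends to `Ext^{j-1}(k, M)`.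
lemma exists_add_eq_and_not_subsingleton_ext {k : ModuleCat.{u} R}
    (hk : maximalIdeal R ≤ Module.annihilator R k) {t : ℕ}
    (hlt : ∀ i < t, Subsingleton (Abelian.Ext k (ModuleCat.of R R) i))
    (ht : ¬ Subsingleton (Abelian.Ext k (ModuleCat.of R R) t)) {p : ℕ} (M : ModuleCat.{u} R)
    [Module.Finite R M] (hle : HasProjectiveDimensionLE M p)
    (hnlt : ¬ HasProjectiveDimensionLT M p) :
    ∃ i, i + p = t ∧ ¬ Subsingleton (Abelian.Ext k M i) := by
  induction p generalizing M with
  | zero =>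
    have := (projective_iff_hasProjectiveDimensionLE_zero M).2 hle
    have := free_of_finite_of_projective M
    rw [hasProjectiveDimensionLT_zero_iff_isZero, ModuleCat.isZero_iff_subsingleton,
      not_subsingleton_iff_nontrivial] at hnlt
    exact ⟨t, add_zero t, fun _ ↦ ht (subsingleton_ext_self_of_free (M := M))⟩
  | succ p ih =>
    obtain ⟨S, hS, rfl, _, _, _, hmin⟩ := exists_shortExact_finite_free_range_le M
    have hproj : Projective S.X₂ := ModuleCat.projective_of_categoryTheory_projective S.X₂
    have hle₁ : HasProjectiveDimensionLE S.X₁ p :=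
      (hS.hasProjectiveDimensionLT_X₃_iff p hproj).1 hle
    have hnlt₁ : ¬ HasProjectiveDimensionLT S.X₁ p := fun h ↦ hnlt <|
      hS.hasProjectiveDimensionLT_X₃ p h (hasProjectiveDimensionLT_of_ge _ 1 (p + 1) (by omega))
    obtain ⟨j, hj, hne⟩ := ih S.X₁ hle₁ hnlt₁
    have hzero (e : Abelian.Ext k S.X₁ j) : e.comp (Ext.mk₀ S.f) (add_zero j) = 0 := by
      obtain rfl | hp := p.eq_zero_or_pos
      · have := (projective_iff_hasProjectiveDimensionLE_zero S.X₁).2 hle₁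
        have := free_of_finite_of_projective S.X₁
        exact ext_comp_mk₀_eq_zero_of_range_le hk hmin e
      · have := hlt j (by omega)
        exact (subsingleton_ext_of_finite_projective S.X₂).elim _ _
    obtain ⟨i, rfl, hi⟩ := exists_not_subsingleton_ext_X₃_of_comp_f_eq_zero hS hzero hne
    exact ⟨i, by omega, hi⟩

lemma length_le_ringKrullDim_of_isRegular {rs : List R}
    (hrs : RingTheory.Sequence.IsRegular R rs) : (rs.length : WithBot ℕ∞) ≤ ringKrullDim R := by
  have : Nontrivial (R ⧸ Ideal.ofList rs) :=
    Ideal.Quotient.nontrivial_iff.2 (by simpa using hrs.top_ne_smul.symm)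
  rw [← ringKrullDim_add_length_eq_ringKrullDim_of_isRegular rs hrs]
  exact le_add_of_nonneg_left ringKrullDim_nonneg_of_nontrivial

lemma natCast_le_ringKrullDim_of_subsingleton_ext_residueField {n : ℕ}
    (h : ∀ i < n, Subsingleton
      (Abelian.Ext (ModuleCat.of R (ResidueField R)) (ModuleCat.of R R) i)) :
    (n : WithBot ℕ∞) ≤ ringKrullDim R := by
  have hlt : maximalIdeal R • (⊤ : Submodule R (ModuleCat.of R R)) < ⊤ :=
    (Ideal.mul_top _).trans_lt (lt_top_iff_ne_top.2 Ideal.IsPrime.ne_top')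
  have hsupp : Module.support R (ResidueField R) = PrimeSpectrum.zeroLocus (maximalIdeal R) := by
    rw [Module.support_eq_zeroLocus, annihilator_residueField]
  have htfae := ModuleCat.exists_isRegular_tfae (maximalIdeal R) n (ModuleCat.of R R) hlt
  obtain ⟨rs, rfl, -, hrs⟩ := (htfae.out 2 3 rfl rfl).1 ⟨ModuleCat.of R (ResidueField R),
      inferInstanceAs (Nontrivial (ResidueField R)),
      inferInstanceAs (Module.Finite R (ResidueField R)), hsupp, h⟩
  exact length_le_ringKrullDim_of_isRegular hrs

lemma projectiveDimension_le_ringKrullDim_of_isLocalRing (M : ModuleCat.{u} R)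
    [Module.Finite R M] (h : projectiveDimension M ≠ ⊤) :
    projectiveDimension M ≤ ringKrullDim R := by
  classical
  let k := ModuleCat.of R (ResidueField R)
  have hex : ∃ t, ¬ Subsingleton (Abelian.Ext k (ModuleCat.of R R) t) := by
    by_contra! hall
    refine ringKrullDim_ne_top (R := R) (ENat.WithBot.eq_top_iff_forall_ge.2 fun n ↦ ?_)
    exact natCast_le_ringKrullDim_of_subsingleton_ext_residueField fun i _ ↦ hall i
  have hmin : ∀ i < Nat.find hex, Subsingleton (Abelian.Ext k (ModuleCat.of R R) i) :=
    fun i hi ↦ not_not.1 (Nat.find_min hex hi)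
  induction hM : projectiveDimension M with
  | bot => exact bot_le
  | coe p =>
    lift p to ℕ using fun hp ↦ h (by rw [hM, hp]; rfl)
    obtain ⟨i, hi, -⟩ := exists_add_eq_and_not_subsingleton_ext annihilator_residueField.ge hmin
      (Nat.find_spec hex) M ((projectiveDimension_le_iff M p).1 hM.le)
      ((projectiveDimension_ge_iff M p).1 hM.ge)
    calc (p : WithBot ℕ∞)
      _ ≤ (Nat.find hex : ℕ) := by exact_mod_cast hi ▸ Nat.le_add_left p i
      _ ≤ ringKrullDim R := natCast_le_ringKrullDim_of_subsingleton_ext_residueField hmin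

end LocalRing

section Localization

variable {R : Type u} [CommRing R] [IsNoetherianRing R]

lemma projectiveDimension_le_ringKrullDim (M : ModuleCat.{u} R) [Module.Finite R M]
    (h : projectiveDimension M ≠ ⊤) : projectiveDimension M ≤ ringKrullDim R := by
  rw [ModuleCat.projectiveDimension_eq_iSup_localizedModule_maximal, iSup_le_iff]
  intro 𝔪
  have : IsNoetherianRing (Localization 𝔪.1.primeCompl) :=
    IsLocalization.isNoetherianRing 𝔪.1.primeCompl _ inferInstance
  have : IsLocalRing (Localization 𝔪.1.primeCompl) :=
    inferInstanceAs (IsLocalRing (Localization.AtPrime 𝔪.1))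
  have : Module.Finite (Localization 𝔪.1.primeCompl) (M.localizedModule 𝔪.1.primeCompl) :=
    .of_isLocalizedModule 𝔪.1.primeCompl (M.localizedModuleMkLinearMap 𝔪.1.primeCompl)
  have hM := M.projectiveDimension_le_projectiveDimension_of_isLocalizedModule 𝔪.1.primeCompl
  calc projectiveDimension (M.localizedModule 𝔪.1.primeCompl)
    _ ≤ ringKrullDim (Localization.AtPrime 𝔪.1) :=
      projectiveDimension_le_ringKrullDim_of_isLocalRing _ (hM.trans_lt h.lt_top).ne
    _ = 𝔪.1.height := IsLocalization.AtPrime.ringKrullDim_eq_height 𝔪.1 _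
    _ ≤ ringKrullDim R := Ideal.height_le_ringKrullDim_of_ne_top Ideal.IsPrime.ne_top'

end Localization

section ExtGroup

variable {R : Type} [CommRing R]

-- `ExtGroup` is a derived functor and `Abelian.Ext` a group of morphisms in the derived category;
-- both are compared with the cocycles of one projective resolution.
lemma subsingleton_extGroup_succ_iff_forall_exists {M : ModuleCat.{0} R}
    (P : ProjectiveResolution M) (N : ModuleCat.{0} R) (i : ℕ) :
    Subsingleton (ExtGroup R M N (i + 1)) ↔
      ∀ f : P.complex.X (i + 1) ⟶ N, P.complex.d (i + 2) (i + 1) ≫ f = 0 →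
        ∃ g : P.complex.X i ⟶ N, P.complex.d (i + 1) i ≫ g = f := by
  rw [← ModuleCat.isZero_iff_subsingleton, (P.isoExt (R := R) (i + 1) N).isZero_iff,
    ← HomologicalComplex.exactAt_iff_isZero_homology,
    HomologicalComplex.exactAt_iff' _ i (i + 1) (i + 2) (by simp) (by simp),
    ShortComplex.moduleCat_exact_iff]
  rfl

lemma subsingleton_ext_succ_iff_forall_exists {M : ModuleCat.{0} R}
    (P : ProjectiveResolution M) (N : ModuleCat.{0} R) (i : ℕ) :
    Subsingleton (Abelian.Ext M N (i + 1)) ↔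
      ∀ f : P.complex.X (i + 1) ⟶ N, P.complex.d (i + 2) (i + 1) ≫ f = 0 →
        ∃ g : P.complex.X i ⟶ N, P.complex.d (i + 1) i ≫ g = f := by
  refine ⟨fun h f hf ↦ ?_, fun h ↦ subsingleton_of_forall_eq 0 fun e ↦ ?_⟩
  · rw [← P.extMk_eq_zero_iff f (i + 2) rfl hf i rfl]
    exact Subsingleton.elim _ _
  · obtain ⟨f, hf, rfl⟩ := P.extMk_surjective e (i + 2) rfl
    rw [P.extMk_eq_zero_iff f (i + 2) rfl hf i rfl]
    exact h f hf

lemma extVanishesAbove_iff_subsingleton_extGroup {n : ℕ} {M N : ModuleCat.{0} R} :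
    ExtVanishesAbove n M N ↔ ∀ i, n < i → Subsingleton (ExtGroup R M N i) := by
  refine forall₂_congr fun i hi ↦ ?_
  obtain ⟨i, rfl⟩ := Nat.exists_eq_succ_of_ne_zero (Nat.ne_zero_of_lt hi)
  rw [subsingleton_extGroup_succ_iff_forall_exists (projectiveResolution M),
    subsingleton_ext_succ_iff_forall_exists (projectiveResolution M)]

lemma sac_iff : SAC R ↔ ∀ M : ModuleCat.{0} R, Module.Finite R M →
    ExtVanishesAbove 0 M (ModuleCat.of R R) → (∃ n, ExtVanishesAbove n M M) →
      ExtVanishesAbove 0 M M := by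
  simp only [extVanishesAbove_iff_subsingleton_extGroup]
  rfl

lemma extDeg_le_natCast_iff {M : ModuleCat.{0} R} {n : ℕ} :
    extDeg R M ≤ n ↔ ExtVanishesAbove n M M := by
  rw [extVanishesAbove_iff_subsingleton_extGroup, extDeg, sSup_le_iff]
  constructor
  · intro h i hi
    by_contra hne
    exact hi.not_ge (by exact_mod_cast h i ⟨i, rfl, hne⟩)
  · rintro h _ ⟨i, rfl, hne⟩
    exact Nat.cast_le.2 (not_lt.1 fun hi ↦ hne (h i hi))

lemma extDeg_prod_le_natCast_iff {M : ModuleCat.{0} R} {n : ℕ} :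
    extDeg R (ModuleCat.of R (M × R)) ≤ n ↔
      ExtVanishesAbove n M M ∧ ExtVanishesAbove n M (ModuleCat.of R R) := by
  rw [extDeg_le_natCast_iff, ExtVanishesAbove.prod_self_iff]

lemma extVanishesAbove_self_of_rfed_le {M : ModuleCat.{0} R} [Module.Finite R M] {r n : ℕ}
    (hr : rfed R ≤ r) (h : ExtVanishesAbove r M (ModuleCat.of R R)) (hM : ExtVanishesAbove n M M) :
    ExtVanishesAbove r M M := by
  have hlt : extDeg R (ModuleCat.of R (M × R)) < ⊤ :=
    (extDeg_prod_le_natCast_iff.2 ⟨hM.mono (le_max_left n r), h.mono (le_max_right n r)⟩).trans_lt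
      (ENat.natCast_lt_top _)
  have hle : extDeg R (ModuleCat.of R (M × R)) ≤ rfed R := le_sSup ⟨M, inferInstance, hlt, rfl⟩
  exact (extDeg_prod_le_natCast_iff.1 (hle.trans hr)).1

end ExtGroup

section Noetherian

variable {R : Type} [CommRing R] [IsNoetherianRing R]

namespace SAC

lemma projective (hR : SAC R) {M : ModuleCat.{0} R} [Module.Finite R M] {n : ℕ}
    (h : ExtVanishesAbove 0 M (ModuleCat.of R R)) (hn : ExtVanishesAbove n M M) :
    Projective M := by
  obtain ⟨S, hS, rfl, _, _, _⟩ := exists_shortExact_finite_projective M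
  have hfin : Module.Finite R ↑(S.X₃ ⊞ S.X₁) :=
    .equiv (ModuleCat.biprodIsoProd S.X₃ S.X₁).toLinearEquiv.symm
  have hself : ExtVanishesAbove 0 (S.X₃ ⊞ S.X₁) (S.X₃ ⊞ S.X₁) :=
    sac_iff.1 hR _ hfin ((extVanishesAbove_zero_biprod_left_iff hS).2 h) ⟨n + 1,
      (extVanishesAbove_succ_biprod_self_iff hS (h.right_of_finite_projective S.X₂)).2 hn⟩
  have hX₃X₁ : ExtVanishesAbove 0 S.X₃ S.X₁ :=
    (ExtVanishesAbove.biprod_right_iff.1 (ExtVanishesAbove.biprod_left_iff.1 hself).1).2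
  have := hX₃X₁ 1 one_pos
  exact projective_X₃_of_subsingleton_ext_one hS

lemma projectiveDimension_ne_top (hR : SAC R) {m n : ℕ} {M : ModuleCat.{0} R} [Module.Finite R M]
    (hM : ExtVanishesAbove m M M) (h : ExtVanishesAbove n M (ModuleCat.of R R)) :
    projectiveDimension M ≠ ⊤ := by
  rw [projectiveDimension_ne_top_iff]
  induction n generalizing m M with
  | zero => exact ⟨0, (projective_iff_hasProjectiveDimensionLE_zero M).1 (hR.projective h hM)⟩
  | succ n ih =>
    obtain ⟨S, hS, rfl, hproj, _, _⟩ := exists_shortExact_finite_projective M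
    let k := max m (n + 1)
    have hX₃X₂ : ExtVanishesAbove k S.X₃ S.X₂ :=
      (h.mono (le_max_right m (n + 1))).right_of_finite_projective S.X₂
    have hX₃X₁ : ExtVanishesAbove (k + 1) S.X₃ S.X₁ :=
      (extVanishesAbove_X₃_right_iff hS hX₃X₂).1 (hM.mono (le_max_left m (n + 1)))
    obtain ⟨p, hp⟩ := ih ((extVanishesAbove_X₁_left_iff hS S.X₁).2 hX₃X₁)
      ((extVanishesAbove_X₁_left_iff hS _).2 h)
    exact ⟨p + 1, (hS.hasProjectiveDimensionLT_X₃_iff p hproj).2 hp⟩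

lemma rfed_le_ringKrullDim [Nontrivial R] (hR : SAC R) :
    (rfed R : WithBot ℕ∞) ≤ ringKrullDim R := by
  obtain ⟨d, hd⟩ := WithBot.ne_bot_iff_exists.1
    (ne_bot_of_le_ne_bot WithBot.zero_ne_bot (ringKrullDim_nonneg_of_nontrivial (R := R)))
  rw [← hd, WithBot.coe_le_coe]
  refine sSup_le ?_
  rintro _ ⟨M, _, hM, rfl⟩
  obtain rfl | hd_top := eq_or_ne d ⊤
  · exact le_top
  lift d to ℕ using hd_top
  lift extDeg R (ModuleCat.of R (M × R)) to ℕ using hM.ne with n hn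
  obtain ⟨hMM, hMR⟩ := extDeg_prod_le_natCast_iff.1 hn.ge
  have hpd : projectiveDimension M ≤ (d : WithBot ℕ∞) :=
    (projectiveDimension_le_ringKrullDim M (hR.projectiveDimension_ne_top hMM hMR)).trans_eq hd.symm
  have := (projectiveDimension_le_iff M d).1 hpd
  rw [hn]
  exact extDeg_prod_le_natCast_iff.2
    ⟨.of_hasProjectiveDimensionLE M _ d, .of_hasProjectiveDimensionLE M _ d⟩

end SAC

lemma sac_of_rfed_lt_top (h : rfed R < ⊤) : SAC R := by
  lift rfed R to ℕ using h.ne with r hr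
  refine sac_iff.2 fun M _ hMR ⟨n, hMM⟩ ↦ ?_
  obtain ⟨N, _, hNR, hiff⟩ := exists_extVanishesAbove_add_self_iff hMR r
  refine (hiff 0).1 ?_
  rw [zero_add]
  exact extVanishesAbove_self_of_rfed_le hr.ge (hNR.mono r.zero_le) ((hiff n).2 hMM)

end Noetherian

/-- For a Noetherian ring `R` of finite Krull dimension: `R` satisfies (SAC) iff
`rfed R < ∞` iff `rfed R ≤ dim R`. -/
theorem stmt_19 (R : Type) [CommRing R] [IsNoetherianRing R] [Nontrivial R]
    (hdim : ringKrullDim R < ⊤) :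
    (SAC R ↔ rfed R < ⊤) ∧ (SAC R ↔ ((rfed R : WithBot ℕ∞) ≤ ringKrullDim R)) := by
  have lt_top_of_le (h : (rfed R : WithBot ℕ∞) ≤ ringKrullDim R) : rfed R < ⊤ :=
    WithBot.coe_lt_coe.1 (h.trans_lt hdim)
  exact ⟨⟨fun h ↦ lt_top_of_le h.rfed_le_ringKrullDim, sac_of_rfed_lt_top⟩,
    SAC.rfed_le_ringKrullDim, fun h ↦ sac_of_rfed_lt_top (lt_top_of_le h)⟩
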